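/- Let f_τ, f_σ : (0,∞) → (0,∞) be operator monotone with f_τ(1) = f_σ(1) = 1 and f_σ strictly increasing, and let τ = σ_{f_τ} and σ = σ_{f_σ} be the induced means; assume moreover that τ and σ are jointly monotone and downward continuous along nonincreasing strongly convergent sequences in P (these hold automatically for operator monotone representing functions). Let A, B ∈ P, let E be an orthogonal projection on H with EA = AE and EB = BE, and let X₀ ∈ P satisfy X₀ = (X₀σA)τ(X₀σB). Then EX₀ = X₀E. -/

import Mathlib

/-!
Conjugation by the reflection `U = 2E - 1` fixes `A` and `B`, and induced means are equivariant
under unitary conjugation, so `U X₀ U` solves the same fixed point equation as `X₀`. It therefore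
suffices that solutions in `P` are unique (`fixed_point_le`), for then `U`, hence `E`, commutes
with `X₀`.

Uniqueness is a strict contraction argument for the Thompson metric. Let `X`, `Y` be solutions and
`c` the least number `≥ 1` with `X ≤ c • Y`. If `c > 1`, then
`X σ A ≤ (c • Y) σ A ≤ (c q) • (Y σ A)` for some `q < 1`, because `f_σ` is strictly increasing and
the spectrum of `Y^{-1/2} A Y^{-1/2}` is compact (`exists_indMean_smul_le`); likewise for `B`.
Monotonicity and homogeneity of `τ` give `X ≤ (c q) • Y`, against the minimality of `c`.

The functional calculus returns the junk value `0` for functions discontinuous on the spectrum, so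
the argument needs `f_τ` and `f_σ` to be continuous; this is extracted from downward continuity on scalar operators
(`continuousOn_of_downCont`).
-/

open scoped ComplexOrder

variable {H : Type*} [NormedAddCommGroup H] [InnerProductSpace ℂ H] [CompleteSpace H]

/-- Membership in `P`, the cone of positive invertible bounded linear operators on `H`. -/
def PosInv (A : H →L[ℂ] H) : Prop := A.IsPositive ∧ IsUnit A

/-- The Loewner order: `A ≤ B` iff `B - A` is positive. -/
def Loe (A B : H →L[ℂ] H) : Prop := (B - A).IsPositive

/-- The strict order `A < B`, meaning `B - A ∈ P`. -/
def LoeLT (A B : H →L[ℂ] H) : Prop := PosInv (B - A)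

/-- `A^{1/2}` via the continuous functional calculus. -/
noncomputable def opSqrt (A : H →L[ℂ] H) : H →L[ℂ] H := cfc Real.sqrt A

/-- `A^{-1/2}` via the continuous functional calculus. -/
noncomputable def opInvSqrt (A : H →L[ℂ] H) : H →L[ℂ] H :=
  cfc (fun x : ℝ => (Real.sqrt x)⁻¹) A

/-- The Thompson metric `d_T(A,B) = ‖log (A^{-1/2} B A^{-1/2})‖`. -/
noncomputable def dT (A B : H →L[ℂ] H) : ℝ :=
  ‖cfc Real.log (opInvSqrt A * B * opInvSqrt A)‖

/-- The mean induced by a function `f`: `A σ_f B = A^{1/2} f(A^{-1/2} B A^{-1/2}) A^{1/2}`. -/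
noncomputable def indMean (f : ℝ → ℝ) (A B : H →L[ℂ] H) : H →L[ℂ] H :=
  opSqrt A * cfc f (opInvSqrt A * B * opInvSqrt A) * opSqrt A

/-- Convergence in the strong operator topology. -/
def SConv (A : ℕ → H →L[ℂ] H) (A0 : H →L[ℂ] H) : Prop :=
  ∀ x : H, Filter.Tendsto (fun k => A k x) Filter.atTop (nhds (A0 x))

/-- Downward continuity of a binary operation along nonincreasing strongly
convergent sequences in `P`. -/
def DownCont (m : (H →L[ℂ] H) → (H →L[ℂ] H) → (H →L[ℂ] H)) : Prop :=
  ∀ (A B : ℕ → H →L[ℂ] H) (A0 B0 : H →L[ℂ] H),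
    (∀ k, PosInv (A k)) → (∀ k, PosInv (B k)) → PosInv A0 → PosInv B0 →
    (∀ k, Loe (A (k + 1)) (A k)) → (∀ k, Loe (B (k + 1)) (B k)) →
    SConv A A0 → SConv B B0 →
    SConv (fun k => m (A k) (B k)) (m A0 B0)

/-- Joint monotonicity of a binary operation on `P`. -/
def JointMono (m : (H →L[ℂ] H) → (H →L[ℂ] H) → (H →L[ℂ] H)) : Prop :=
  ∀ A A' B B', PosInv A → PosInv A' → PosInv B → PosInv B' →
    Loe A A' → Loe B B' → Loe (m A B) (m A' B')

lemma posInv_iff {A : H →L[ℂ] H} : PosInv A ↔ IsStrictlyPositive A := by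
  rw [IsStrictlyPositive, PosInv, ContinuousLinearMap.nonneg_iff_isPositive]

lemma loe_iff {A B : H →L[ℂ] H} : Loe A B ↔ A ≤ B := Iff.rfl

/-! ### Positive invertible operators and induced means -/

lemma PosInv.isSelfAdjoint {A : H →L[ℂ] H} (hA : PosInv A) : IsSelfAdjoint A :=
  hA.1.isSelfAdjoint

lemma PosInv.spectrum_pos {A : H →L[ℂ] H} (hA : PosInv A) {x : ℝ} (hx : x ∈ spectrum ℝ A) :
    0 < x := by
  have h0 : 0 ≤ x := spectrum_nonneg_of_nonneg (posInv_iff.1 hA).nonneg hx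
  refine lt_of_le_of_ne h0 fun h => ?_
  subst h
  exact (spectrum.zero_notMem_iff ℝ).2 hA.2 hx

lemma PosInv.cfc {A : H →L[ℂ] H} (hA : PosInv A) {f : ℝ → ℝ}
    (hf : ContinuousOn f (Set.Ioi 0)) (hpos : ∀ x : ℝ, 0 < x → 0 < f x) :
    PosInv (cfc f A) := by
  have hsa := hA.isSelfAdjoint
  rw [posInv_iff]
  refine ⟨cfc_nonneg fun x hx => (hpos x (hA.spectrum_pos hx)).le, ?_⟩
  exact (isUnit_cfc_iff f A (hf.mono fun x hx => hA.spectrum_pos hx)).2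
    fun x hx => (hpos x (hA.spectrum_pos hx)).ne'

lemma PosInv.smul {A : H →L[ℂ] H} (hA : PosInv A) {c : ℝ} (hc : 0 < c) : PosInv (c • A) := by
  rw [posInv_iff] at *
  exact ⟨smul_nonneg hc.le hA.nonneg, hA.isUnit.smul (Units.mk0 c hc.ne')⟩

lemma PosInv.conj {A S : H →L[ℂ] H} (hA : PosInv A) (hS : PosInv S) : PosInv (S * A * S) := by
  rw [posInv_iff] at *
  exact ⟨conjugate_nonneg_of_nonneg hA.nonneg hS.nonneg, (hS.isUnit.mul hA.isUnit).mul hS.isUnit⟩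

lemma PosInv.opSqrt {A : H →L[ℂ] H} (hA : PosInv A) : PosInv (opSqrt A) :=
  hA.cfc Real.continuous_sqrt.continuousOn fun _ hx => Real.sqrt_pos.2 hx

lemma continuousOn_inv_sqrt : ContinuousOn (fun x : ℝ => (Real.sqrt x)⁻¹) (Set.Ioi 0) :=
  Real.continuous_sqrt.continuousOn.inv₀ fun _ hx => (Real.sqrt_pos.2 hx).ne'

lemma PosInv.opInvSqrt {A : H →L[ℂ] H} (hA : PosInv A) : PosInv (opInvSqrt A) :=
  hA.cfc continuousOn_inv_sqrt fun _ hx => inv_pos.2 (Real.sqrt_pos.2 hx)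

lemma PosInv.indMean {A B : H →L[ℂ] H} (hA : PosInv A) (hB : PosInv B) {f : ℝ → ℝ}
    (hf : ContinuousOn f (Set.Ioi 0)) (hpos : ∀ x : ℝ, 0 < x → 0 < f x) :
    PosInv (indMean f A B) :=
  ((hB.conj hA.opInvSqrt).cfc hf hpos).conj hA.opSqrt

/-! ### Homogeneity and strict subhomogeneity -/

lemma opSqrt_smul {A : H →L[ℂ] H} (hA : PosInv A) {c : ℝ} (hc : 0 < c) :
    opSqrt (c • A) = Real.sqrt c • opSqrt A := by
  have hsa := hA.isSelfAdjoint
  unfold opSqrt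
  rw [← cfc_comp_const_mul c Real.sqrt A Real.continuous_sqrt.continuousOn,
    ← cfc_const_mul _ _ A Real.continuous_sqrt.continuousOn]
  exact cfc_congr fun x _ => Real.sqrt_mul hc.le x

lemma opInvSqrt_smul {A : H →L[ℂ] H} (hA : PosInv A) {c : ℝ} (hc : 0 < c) :
    opInvSqrt (c • A) = (Real.sqrt c)⁻¹ • opInvSqrt A := by
  have hsa := hA.isSelfAdjoint
  unfold opInvSqrt
  rw [← cfc_comp_const_mul c (fun x : ℝ => (Real.sqrt x)⁻¹) A
      (continuousOn_inv_sqrt.mono ?_),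
    ← cfc_const_mul _ _ A (continuousOn_inv_sqrt.mono fun x hx => hA.spectrum_pos hx)]
  · refine cfc_congr fun x _ => ?_
    simp only [Real.sqrt_mul hc.le x, mul_inv]
  · rintro _ ⟨x, hx, rfl⟩
    exact mul_pos hc (hA.spectrum_pos hx)

lemma opInvSqrt_conj_smul {A : H →L[ℂ] H} (hA : PosInv A) (B : H →L[ℂ] H) {c : ℝ} (hc : 0 < c) :
    opInvSqrt (c • A) * B * opInvSqrt (c • A) = c⁻¹ • (opInvSqrt A * B * opInvSqrt A) := by
  rw [opInvSqrt_smul hA hc]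
  simp only [smul_mul_assoc, mul_smul_comm, smul_smul]
  rw [← mul_inv, Real.mul_self_sqrt hc.le]

lemma opSqrt_conj_smul {A : H →L[ℂ] H} (hA : PosInv A) (B : H →L[ℂ] H) {c : ℝ} (hc : 0 < c) :
    opSqrt (c • A) * B * opSqrt (c • A) = c • (opSqrt A * B * opSqrt A) := by
  rw [opSqrt_smul hA hc]
  simp only [smul_mul_assoc, mul_smul_comm, smul_smul]
  rw [Real.mul_self_sqrt hc.le]

lemma indMean_smul_smul {A : H →L[ℂ] H} (hA : PosInv A) (B : H →L[ℂ] H) (f : ℝ → ℝ)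
    {c : ℝ} (hc : 0 < c) : indMean f (c • A) (c • B) = c • indMean f A B := by
  unfold indMean
  rw [opSqrt_conj_smul hA _ hc, opInvSqrt_conj_smul hA _ hc, mul_smul_comm, smul_mul_assoc,
    inv_smul_smul₀ hc.ne']

/-- Enlarging the first argument by a factor `c > 1` enlarges the mean by a factor strictly
less than `c`: on the compact spectrum of `A^{-1/2} B A^{-1/2}` the ratio `f (x / c) / f x`
attains a maximum, which is less than `1`. -/
lemma exists_indMean_smul_le [Nontrivial H] {A B : H →L[ℂ] H} (hA : PosInv A) (hB : PosInv B)
    {f : ℝ → ℝ} (hf : ContinuousOn f (Set.Ioi 0)) (hpos : ∀ x : ℝ, 0 < x → 0 < f x)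
    (hmono : StrictMonoOn f (Set.Ioi 0)) {c : ℝ} (hc : 1 < c) :
    ∃ q < 1, indMean f (c • A) B ≤ (c * q) • indMean f A B := by
  have hc0 : 0 < c := one_pos.trans hc
  have hC := hB.conj hA.opInvSqrt
  set C := opInvSqrt A * B * opInvSqrt A with hCdef
  have hCsa := hC.isSelfAdjoint
  have hf1 : ContinuousOn f (spectrum ℝ C) := hf.mono fun x hx => hC.spectrum_pos hx
  have hmaps : Set.MapsTo (fun x => c⁻¹ * x) (spectrum ℝ C) (Set.Ioi 0) :=
    fun x hx => mul_pos (inv_pos.2 hc0) (hC.spectrum_pos hx)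
  have hf2 : ContinuousOn (fun x => f (c⁻¹ * x)) (spectrum ℝ C) :=
    hf.comp (by fun_prop) hmaps
  have hne : (spectrum ℝ C).Nonempty := ContinuousFunctionalCalculus.spectrum_nonempty C hCsa
  obtain ⟨x₀, hx₀, hmax⟩ := (ContinuousFunctionalCalculus.isCompact_spectrum C).exists_isMaxOn hne
    (hf2.div hf1 fun x hx => (hpos x (hC.spectrum_pos hx)).ne')
  have hx₀pos := hC.spectrum_pos hx₀
  refine ⟨f (c⁻¹ * x₀) / f x₀, ?_, ?_⟩
  · rw [div_lt_one (hpos _ hx₀pos)]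
    refine hmono (hmaps hx₀) hx₀pos ?_
    exact mul_lt_of_lt_one_left hx₀pos (inv_lt_one_of_one_lt₀ hc)
  · set q := f (c⁻¹ * x₀) / f x₀
    have key : cfc f (c⁻¹ • C) ≤ q • cfc f C := by
      rw [← cfc_comp_const_mul c⁻¹ f C (hf.mono hmaps.image_subset), ← cfc_const_mul q f C hf1]
      refine cfc_mono (fun x hx => ?_) hf2 (continuousOn_const.mul hf1)
      have := hmax hx
      exact (div_le_iff₀ (hpos x (hC.spectrum_pos hx))).1 this
    unfold indMean
    rw [opSqrt_conj_smul hA _ hc0, opInvSqrt_conj_smul hA _ hc0, ← hCdef, mul_smul]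
    refine smul_le_smul_of_nonneg_left ?_ hc0.le
    have := conjugate_le_conjugate_of_nonneg key (posInv_iff.1 hA.opSqrt).nonneg
    simpa only [mul_smul_comm, smul_mul_assoc] using this

/-! ### Uniqueness of the fixed point -/

/-- Any solution `X` lies below any other solution `Y`: the least `c ≥ 1` with
`X ≤ c • Y` is `1`, since for `c > 1` the map `X ↦ (X σ A) τ (X σ B)` would shrink `c`. -/
lemma fixed_point_le [Nontrivial H] {fτ fσ : ℝ → ℝ} (hσpos : ∀ x : ℝ, 0 < x → 0 < fσ x)
    (hσsmono : StrictMonoOn fσ (Set.Ioi 0)) (hσc : ContinuousOn fσ (Set.Ioi 0))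
    (hτmono : JointMono (H := H) (indMean fτ)) (hσmono : JointMono (H := H) (indMean fσ))
    {A B X Y : H →L[ℂ] H} (hA : PosInv A) (hB : PosInv B) (hX : PosInv X) (hY : PosInv Y)
    (hXfix : X = indMean fτ (indMean fσ X A) (indMean fσ X B))
    (hYfix : Y = indMean fτ (indMean fσ Y A) (indMean fσ Y B)) : X ≤ Y := by
  have hYn := (posInv_iff.1 hY).nonneg
  let S : Set ℝ := {c | 1 ≤ c ∧ X ≤ c • Y}
  have hSclosed : IsClosed S := by
    refine isClosed_Ici.inter ?_
    exact isClosed_le (f := fun _ : ℝ => X) (g := fun c : ℝ => c • Y) continuous_const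
      (by fun_prop)
  have hSbdd : BddBelow S := ⟨1, fun c hc => hc.1⟩
  have hSne : S.Nonempty := by
    obtain ⟨r, hr, hrY⟩ := (CFC.exists_pos_algebraMap_le_iff hY.isSelfAdjoint).2
      fun x hx => hY.spectrum_pos hx
    refine ⟨max 1 (‖X‖ * r⁻¹), le_max_left _ _, ?_⟩
    have hX1 : X ≤ algebraMap ℝ _ ‖X‖ := hX.isSelfAdjoint.le_algebraMap_norm_self
    calc X ≤ algebraMap ℝ _ ‖X‖ := hX1
      _ = (‖X‖ * r⁻¹) • algebraMap ℝ _ r := by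
        rw [Algebra.algebraMap_eq_smul_one, Algebra.algebraMap_eq_smul_one, smul_smul,
          inv_mul_cancel_right₀ hr.ne']
      _ ≤ (‖X‖ * r⁻¹) • Y := smul_le_smul_of_nonneg_left hrY (by positivity)
      _ ≤ _ := smul_le_smul_of_nonneg_right (le_max_right _ _) hYn
  obtain ⟨h1, hle⟩ := hSclosed.csInf_mem hSne hSbdd
  set c := sInf S with hcdef
  rcases h1.eq_or_lt with h | h1
  · rwa [← h, one_smul] at hle
  exfalso
  have hc0 : 0 < c := one_pos.trans h1
  obtain ⟨q₁, hq₁, hA'⟩ := exists_indMean_smul_le hY hA hσc hσpos hσsmono h1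
  obtain ⟨q₂, hq₂, hB'⟩ := exists_indMean_smul_le hY hB hσc hσpos hσsmono h1
  -- Including `c⁻¹` in the maximum keeps `c * q ≥ 1`, so that `c * q` again lies in `S`.
  let q := max c⁻¹ (max q₁ q₂)
  have hq : q < 1 := max_lt (inv_lt_one_of_one_lt₀ h1) (max_lt hq₁ hq₂)
  have hcq1 : 1 ≤ c * q := by
    calc 1 = c * c⁻¹ := (mul_inv_cancel₀ hc0.ne').symm
      _ ≤ c * q := mul_le_mul_of_nonneg_left (le_max_left _ _) hc0.le
  have hcq0 : 0 < c * q := one_pos.trans_le hcq1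
  have step : ∀ Z : H →L[ℂ] H, PosInv Z → ∀ p ≤ q,
      indMean fσ (c • Y) Z ≤ (c * p) • indMean fσ Y Z →
      indMean fσ X Z ≤ (c * q) • indMean fσ Y Z := by
    intro Z hZ p hp hle'
    refine (loe_iff.1 (hσmono X (c • Y) Z Z hX (hY.smul hc0) hZ hZ hle
      (loe_iff.2 le_rfl))).trans (hle'.trans ?_)
    exact smul_le_smul_of_nonneg_right (mul_le_mul_of_nonneg_left hp hc0.le)
      (posInv_iff.1 (hY.indMean hZ hσc hσpos)).nonneg
  have hYA := hY.indMean hA hσc hσpos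
  have hYB := hY.indMean hB hσc hσpos
  have hfin : X ≤ (c * q) • Y := by
    have := hτmono _ _ _ _ (hX.indMean hA hσc hσpos) (hYA.smul hcq0)
      (hX.indMean hB hσc hσpos) (hYB.smul hcq0)
      (step A hA q₁ ((le_max_left _ _).trans (le_max_right _ _)) hA')
      (step B hB q₂ ((le_max_right _ _).trans (le_max_right _ _)) hB')
    rw [indMean_smul_smul hYA _ _ hcq0, ← hXfix, ← hYfix] at this
    exact this
  have : c ≤ c * q := csInf_le hSbdd ⟨hcq1, hfin⟩
  nlinarith

/-! ### Continuity of the representing function -/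

lemma posInv_one : PosInv (1 : H →L[ℂ] H) := by
  rw [posInv_iff]; exact ⟨zero_le_one, isUnit_one⟩

lemma cfc_smul_one (f : ℝ → ℝ) (a : ℝ) : cfc f (a • (1 : H →L[ℂ] H)) = f a • 1 := by
  simpa only [Algebra.algebraMap_eq_smul_one] using cfc_algebraMap (A := H →L[ℂ] H) a f

lemma indMean_smul_one (f : ℝ → ℝ) {a : ℝ} (ha : 0 < a) (b : ℝ) :
    indMean f (a • (1 : H →L[ℂ] H)) (b • 1) = (a * f (a⁻¹ * b)) • 1 := by
  have h1 : opSqrt (1 : H →L[ℂ] H) = 1 := by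
    have := cfc_smul_one (H := H) Real.sqrt 1
    rwa [Real.sqrt_one, one_smul] at this
  have h2 : opInvSqrt (1 : H →L[ℂ] H) = 1 := by
    have := cfc_smul_one (H := H) (fun x : ℝ => (Real.sqrt x)⁻¹) 1
    rwa [Real.sqrt_one, inv_one, one_smul] at this
  unfold indMean
  rw [opSqrt_conj_smul posInv_one _ ha, opInvSqrt_conj_smul posInv_one _ ha, h1, h2]
  simp only [one_mul, mul_one, smul_smul, cfc_smul_one]

lemma smul_one_le_iff [Nontrivial H] {a b : ℝ} :
    a • (1 : H →L[ℂ] H) ≤ b • 1 ↔ a ≤ b := by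
  refine ⟨fun h => ?_, fun h => smul_le_smul_of_nonneg_right h zero_le_one⟩
  obtain ⟨x, hx⟩ := exists_norm_eq H zero_le_one
  have h' := ContinuousLinearMap.IsPositive.re_inner_nonneg_right h x
  simpa [← sub_smul, hx, inner_smul_right_eq_smul] using h'

lemma sConv_smul_one_iff [Nontrivial H] {u : ℕ → ℝ} {a : ℝ} :
    SConv (fun k => u k • (1 : H →L[ℂ] H)) (a • 1) ↔
      Filter.Tendsto u Filter.atTop (nhds a) := by
  constructor
  · intro h
    obtain ⟨x, hx⟩ := exists_norm_eq H zero_le_one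
    have := Filter.Tendsto.inner (𝕜 := ℂ) (tendsto_const_nhds (x := x)) (h x)
    have h2 := (Complex.continuous_re.tendsto _).comp this
    simpa [Function.comp_def, hx, inner_smul_right_eq_smul] using h2
  · intro h x
    simpa using h.smul_const x

/-- Downward continuity on scalar operators forces `f` to be continuous: decreasing the second
argument gives right continuity, decreasing the first one gives left continuity. -/
lemma continuousOn_of_downCont [Nontrivial H] {f : ℝ → ℝ} (hmono : MonotoneOn f (Set.Ioi 0))
    (hcont : DownCont (H := H) (indMean f)) : ContinuousOn f (Set.Ioi 0) := by
  have key : ∀ (u v : ℕ → ℝ) (a b : ℝ), (∀ k, 0 < u k) → (∀ k, 0 < v k) → 0 < a → 0 < b →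
      (∀ k, u (k + 1) ≤ u k) → (∀ k, v (k + 1) ≤ v k) →
      Filter.Tendsto u Filter.atTop (nhds a) → Filter.Tendsto v Filter.atTop (nhds b) →
      Filter.Tendsto (fun k => u k * f ((u k)⁻¹ * v k)) Filter.atTop
        (nhds (a * f (a⁻¹ * b))) := by
    intro u v a b hu hv ha hb hu' hv' hut hvt
    have := hcont (fun k => u k • 1) (fun k => v k • 1) (a • 1) (b • 1)
      (fun k => posInv_one.smul (hu k)) (fun k => posInv_one.smul (hv k))
      (posInv_one.smul ha) (posInv_one.smul hb)
      (fun k => smul_one_le_iff.2 (hu' k)) (fun k => smul_one_le_iff.2 (hv' k))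
      (sConv_smul_one_iff.2 hut) (sConv_smul_one_iff.2 hvt)
    simp only [indMean_smul_one f (hu _), indMean_smul_one f ha] at this
    exact sConv_smul_one_iff.1 this
  intro x hx
  have hx : 0 < x := hx
  have hε : Filter.Tendsto (fun k : ℕ => 1 / ((k : ℝ) + 1)) Filter.atTop (nhds 0) :=
    tendsto_one_div_add_atTop_nhds_zero_nat
  have hεpos : ∀ k : ℕ, 0 < 1 / ((k : ℝ) + 1) := fun k => by positivity
  have hεanti : ∀ k : ℕ, 1 / (((k + 1 : ℕ) : ℝ) + 1) ≤ 1 / ((k : ℝ) + 1) := fun k => by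
    apply one_div_le_one_div_of_le (by positivity); push_cast; linarith
  have hright : Filter.Tendsto (fun k : ℕ => f (x + 1 / ((k : ℝ) + 1))) Filter.atTop
      (nhds (f x)) := by
    have := key (fun _ => 1) (fun k => x + 1 / ((k : ℝ) + 1)) 1 x (fun _ => one_pos)
      (fun k => add_pos hx (hεpos k)) one_pos hx (fun _ => le_rfl)
      (fun k => by linarith [hεanti k]) tendsto_const_nhds (by simpa using hε.const_add x)
    simpa using this
  have hleft : Filter.Tendsto (fun k : ℕ => f ((x⁻¹ + 1 / ((k : ℝ) + 1))⁻¹)) Filter.atTop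
      (nhds (f x)) := by
    have hlim : Filter.Tendsto (fun k : ℕ => x⁻¹ + 1 / ((k : ℝ) + 1)) Filter.atTop
        (nhds x⁻¹) := by simpa using hε.const_add x⁻¹
    have hupos : ∀ k : ℕ, 0 < x⁻¹ + 1 / ((k : ℝ) + 1) :=
      fun k => add_pos (inv_pos.2 hx) (hεpos k)
    have := key (fun k => x⁻¹ + 1 / ((k : ℝ) + 1)) (fun _ => 1) x⁻¹ 1 hupos
      (fun _ => one_pos) (inv_pos.2 hx) one_pos (fun k => by linarith [hεanti k])
      (fun _ => le_rfl) hlim tendsto_const_nhds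
    have h2 := (hlim.inv₀ (inv_pos.2 hx).ne').mul this
    simp only [mul_one, inv_inv] at h2
    rw [mul_inv_cancel_left₀ hx.ne'] at h2
    refine h2.congr fun k => ?_
    rw [inv_mul_cancel_left₀ (hupos k).ne']
  refine ContinuousAt.continuousWithinAt (tendsto_order.2 ⟨fun b hb => ?_, fun b hb => ?_⟩)
  · obtain ⟨k, hk⟩ := (hleft.eventually (lt_mem_nhds hb)).exists
    have hlt : (x⁻¹ + 1 / ((k : ℝ) + 1))⁻¹ < x :=
      inv_lt_of_inv_lt₀ hx (by linarith [hεpos k])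
    have hpos : 0 < (x⁻¹ + 1 / ((k : ℝ) + 1))⁻¹ := by positivity
    filter_upwards [lt_mem_nhds hlt] with y hy
    exact hk.trans_le (hmono hpos (hpos.trans hy) hy.le)
  · obtain ⟨k, hk⟩ := (hright.eventually (gt_mem_nhds hb)).exists
    filter_upwards [gt_mem_nhds (lt_add_of_pos_right x (hεpos k)), lt_mem_nhds hx] with y hy hy0
    exact (hmono hy0 (hy0.trans hy) hy.le).trans_lt hk

/-! ### Equivariance under ⋆-automorphisms -/

lemma map_cfc_of_posInv (φ : (H →L[ℂ] H) ≃⋆ₐ[ℂ] (H →L[ℂ] H)) (hφ : Continuous φ)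
    {f : ℝ → ℝ} (hf : ContinuousOn f (Set.Ioi 0)) {A : H →L[ℂ] H} (hA : PosInv A) :
    φ (cfc f A) = cfc f (φ A) :=
  StarAlgHomClass.map_cfc (S := ℂ) φ f A (hf.mono fun _ hx => hA.spectrum_pos hx) hφ
    hA.isSelfAdjoint (hA.isSelfAdjoint.map φ)

lemma map_indMean (φ : (H →L[ℂ] H) ≃⋆ₐ[ℂ] (H →L[ℂ] H)) (hφ : Continuous φ)
    {f : ℝ → ℝ} (hf : ContinuousOn f (Set.Ioi 0)) {A B : H →L[ℂ] H} (hA : PosInv A)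
    (hB : PosInv B) : φ (indMean f A B) = indMean f (φ A) (φ B) := by
  have h1 : φ (opSqrt A) = opSqrt (φ A) :=
    map_cfc_of_posInv φ hφ Real.continuous_sqrt.continuousOn hA
  have h2 : φ (opInvSqrt A) = opInvSqrt (φ A) :=
    map_cfc_of_posInv φ hφ continuousOn_inv_sqrt hA
  unfold indMean
  rw [map_mul, map_mul, map_cfc_of_posInv φ hφ hf (hB.conj hA.opInvSqrt), map_mul, map_mul, h1, h2]

/-! ### Commutation with the projection -/

/-- If `E` is an orthogonal projection commuting with `A` and `B`, then `E` commutes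
with any solution `X₀ ∈ P` of the fixed point equation `X₀ = (X₀σA)τ(X₀σB)`, where
`τ, σ` are the means induced by operator monotone `f_τ, f_σ` with value `1` at `1`,
`f_σ` strictly increasing. -/
theorem fixed_point_commutes_with_projection
    (fτ fσ : ℝ → ℝ)
    (hτpos : ∀ x : ℝ, 0 < x → 0 < fτ x) (hσpos : ∀ x : ℝ, 0 < x → 0 < fσ x)
    (hτ1 : fτ 1 = 1) (hσ1 : fσ 1 = 1)
    (hσsmono : StrictMonoOn fσ (Set.Ioi 0))
    (hτopmono : ∀ A B : H →L[ℂ] H, PosInv A → PosInv B → Loe A B →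
      Loe (cfc fτ A) (cfc fτ B))
    (hσopmono : ∀ A B : H →L[ℂ] H, PosInv A → PosInv B → Loe A B →
      Loe (cfc fσ A) (cfc fσ B))
    (hτmono : JointMono (H := H) (indMean fτ)) (hσmono : JointMono (H := H) (indMean fσ))
    (hτcont : DownCont (H := H) (indMean fτ)) (hσcont : DownCont (H := H) (indMean fσ))
    (A B : H →L[ℂ] H) (hA : PosInv A) (hB : PosInv B)
    (E : H →L[ℂ] H) (hEidem : E * E = E) (hEsa : IsSelfAdjoint E)
    (hEA : E * A = A * E) (hEB : E * B = B * E)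
    (X₀ : H →L[ℂ] H) (hX₀ : PosInv X₀)
    (hfix : X₀ = indMean fτ (indMean fσ X₀ A) (indMean fσ X₀ B)) :
    E * X₀ = X₀ * E := by
  cases subsingleton_or_nontrivial H
  · exact Subsingleton.elim _ _
  have hσc := continuousOn_of_downCont hσsmono.monotoneOn hσcont
  have hτm : MonotoneOn fτ (Set.Ioi 0) := by
    intro a ha b hb hab
    have := hτopmono _ _ (posInv_one.smul ha) (posInv_one.smul hb) (smul_one_le_iff.2 hab)
    rw [cfc_smul_one, cfc_smul_one] at this
    exact smul_one_le_iff.1 this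
  have hτc := continuousOn_of_downCont hτm hτcont
  -- The reflection `U = 2E - 1` is a self-adjoint unitary commuting with `A` and `B`.
  let U : H →L[ℂ] H := E + E - 1
  have hUsa : star U = U := by simp [U, hEsa.star_eq]
  have hUU : U * U = 1 := by
    simp only [U, mul_sub, sub_mul, mul_add, add_mul, hEidem, mul_one, one_mul]
    abel
  let u : unitary (H →L[ℂ] H) := ⟨U, by rw [Unitary.mem_iff, hUsa]; exact ⟨hUU, hUU⟩⟩
  let φ := Unitary.conjStarAlgAut ℂ (H →L[ℂ] H) u
  have hφ : ∀ Z, φ Z = U * Z * U := fun Z => by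
    rw [Unitary.conjStarAlgAut_apply]; exact congrArg (U * Z * ·) hUsa
  have hφc : Continuous φ := by
    have : (φ : (H →L[ℂ] H) → (H →L[ℂ] H)) = fun Z => U * Z * U := funext hφ
    rw [this]; fun_prop
  have hfixφ : ∀ Z, E * Z = Z * E → φ Z = Z := by
    intro Z hZ
    have : U * Z = Z * U := by
      simp only [U, sub_mul, add_mul, mul_sub, mul_add, hZ, one_mul, mul_one]
    rw [hφ, this, mul_assoc, hUU, mul_one]
  have hY : PosInv (φ X₀) := by
    rw [posInv_iff] at *
    exact ⟨map_nonneg φ hX₀.nonneg, hX₀.isUnit.map φ⟩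
  have hYfix : φ X₀ = indMean fτ (indMean fσ (φ X₀) A) (indMean fσ (φ X₀) B) := by
    conv_lhs => rw [hfix]
    rw [map_indMean φ hφc hτc (hX₀.indMean hA hσc hσpos) (hX₀.indMean hB hσc hσpos),
      map_indMean φ hφc hσc hX₀ hA, map_indMean φ hφc hσc hX₀ hB, hfixφ A hEA, hfixφ B hEB]
  have heq : φ X₀ = X₀ := le_antisymm
    (fixed_point_le hσpos hσsmono hσc hτmono hσmono hA hB hY hX₀ hYfix hfix)
    (fixed_point_le hσpos hσsmono hσc hτmono hσmono hA hB hX₀ hY hfix hYfix)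
  have hcomm : U * X₀ = X₀ * U := by
    have := congrArg (· * U) heq
    simpa only [hφ, mul_assoc, hUU, mul_one] using this
  have h2 : (2 : ℂ) • (E * X₀) = (2 : ℂ) • (X₀ * E) := by
    simp only [U, sub_mul, add_mul, mul_sub, mul_add, one_mul, mul_one] at hcomm
    rw [two_smul, two_smul]
    exact sub_left_injective hcomm
  exact smul_right_injective _ two_ne_zero h2
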